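/- Fix λ0 ∈ ℝ and let g be an exchangeable prior with ∫ τ′τ g(dτ) < ∞. Let d be a symmetric design satisfying ∑_{s∈R} p_s r_s′(x_0) = 0 (where r_s′ is the derivative of r_s) and p_s = 0 for every s ∉ R. Then for every design d′ and every generalized inverse G′ of A_{d′22}: ∫ τ′ A_{d′}(G′) τ g(dτ) ≤ ∫ τ′ A_d(G) τ g(dτ), for any generalized inverse G of A_{d22}. -/

import Mathlib

open Matrix MeasureTheory
open scoped Classical

noncomputable section

/-- A treatment sequence: assigns a treatment in `Fin t` to each period in `Fin p`. -/
abbrev TrtSeq (p t : ℕ) := Fin p → Fin t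

/-- Treatment/period incidence matrix `T_s`. -/
def Tmat {p t : ℕ} (s : TrtSeq p t) : Matrix (Fin p) (Fin t) ℝ :=
  Matrix.of fun k i => if s k = i then 1 else 0

/-- Carryover incidence matrix `F_s`: first row zero, row `k` records the treatment
in period `k-1`. -/
def Fmat {p t : ℕ} (s : TrtSeq p t) : Matrix (Fin p) (Fin t) ℝ :=
  Matrix.of fun k i =>
    if (k : ℕ) = 0 then 0
    else if s ⟨(k : ℕ) - 1, Nat.lt_of_le_of_lt (Nat.sub_le _ _) k.isLt⟩ = i then 1 else 0

/-- The all-ones `m × m` matrix `J_m`. -/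
def Jmat (m : ℕ) : Matrix (Fin m) (Fin m) ℝ := Matrix.of fun _ _ => 1

/-- `B_t = I_t - J_t / t`. -/
def Bmat (t : ℕ) : Matrix (Fin t) (Fin t) ℝ := 1 - ((t : ℝ))⁻¹ • Jmat t

/-- `B̃ = Σ⁻¹ - Σ⁻¹ J_p Σ⁻¹ / (1_p' Σ⁻¹ 1_p)`. -/
def Btil {p : ℕ} (S : Matrix (Fin p) (Fin p) ℝ) : Matrix (Fin p) (Fin p) ℝ :=
  S⁻¹ - (((fun _ => (1 : ℝ)) : Fin p → ℝ) ⬝ᵥ (S⁻¹ *ᵥ fun _ => (1 : ℝ)))⁻¹ •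
    (S⁻¹ * Jmat p * S⁻¹)

/-- `G_1(s) = T_s`, `G_2(s) = F_s`. -/
def Gmat {p t : ℕ} (i : Fin 2) (s : TrtSeq p t) : Matrix (Fin p) (Fin t) ℝ :=
  if i = 0 then Tmat s else Fmat s

/-- An approximate design: nonnegative weights summing to one. -/
def IsDesign {p t : ℕ} (w : TrtSeq p t → ℝ) : Prop :=
  (∀ s, 0 ≤ w s) ∧ ∑ s : TrtSeq p t, w s = 1

/-- `Ĉ_{sij} = B_t G_i(s)' B̃ G_j(s) B_t`. -/
def Chat {p t : ℕ} (S : Matrix (Fin p) (Fin p) ℝ) (s : TrtSeq p t) (i j : Fin 2) :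
    Matrix (Fin t) (Fin t) ℝ :=
  Bmat t * (Gmat i s)ᵀ * Btil S * Gmat j s * Bmat t

/-- `c_{sij} = tr Ĉ_{sij}`. -/
def cseq {p t : ℕ} (S : Matrix (Fin p) (Fin p) ℝ) (s : TrtSeq p t) (i j : Fin 2) : ℝ :=
  (Chat S s i j).trace

/-- `Ĉ_{dij} = n ∑_s p_s Ĉ_{sij}`. -/
def ChatD {p t : ℕ} (n : ℕ) (S : Matrix (Fin p) (Fin p) ℝ) (w : TrtSeq p t → ℝ)
    (i j : Fin 2) : Matrix (Fin t) (Fin t) ℝ :=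
  (n : ℝ) • ∑ s : TrtSeq p t, w s • Chat S s i j

/-- `C_{dij} = Ĉ_{dij} - n (∑_s p_s G_i(s) B_t)' B̃ (∑_s p_s G_j(s) B_t)`. -/
def CD {p t : ℕ} (n : ℕ) (S : Matrix (Fin p) (Fin p) ℝ) (w : TrtSeq p t → ℝ)
    (i j : Fin 2) : Matrix (Fin t) (Fin t) ℝ :=
  ChatD n S w i j -
    (n : ℝ) • ((∑ s : TrtSeq p t, w s • (Gmat i s * Bmat t))ᵀ * Btil S *
      (∑ s : TrtSeq p t, w s • (Gmat j s * Bmat t)))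

/-- `c_{dij} = tr Ĉ_{dij} = n ∑_s p_s c_{sij}`. -/
def cD {p t : ℕ} (n : ℕ) (S : Matrix (Fin p) (Fin p) ℝ) (w : TrtSeq p t → ℝ)
    (i j : Fin 2) : ℝ :=
  (ChatD n S w i j).trace

/-- Fisher information matrix `C_{d,τ0,λ0}` for the direct treatment effects under the
proportional model. -/
def CInfo {p t : ℕ} (n : ℕ) (S : Matrix (Fin p) (Fin p) ℝ) (w : TrtSeq p t → ℝ)
    (τ0 : Fin t → ℝ) (l0 : ℝ) : Matrix (Fin t) (Fin t) ℝ :=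
  CD n S w 0 0 + l0 • (CD n S w 0 1 + CD n S w 1 0) + (l0 ^ 2) • CD n S w 1 1 -
    (τ0 ⬝ᵥ (CD n S w 1 1 *ᵥ τ0))⁻¹ •
      ((CD n S w 0 1 + l0 • CD n S w 1 1) * vecMulVec τ0 τ0 *
        (CD n S w 1 0 + l0 • CD n S w 1 1))

/-- Permutation matrix `S_σ` with `(S_σ)_{j,i} = 1` iff `i = σ j`. -/
def Smat {t : ℕ} (σ : Equiv.Perm (Fin t)) : Matrix (Fin t) (Fin t) ℝ :=
  Matrix.of fun j i => if i = σ j then 1 else 0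

/-- The relabelled sequence `σ ∘ s`. -/
def permSeq {p t : ℕ} (σ : Equiv.Perm (Fin t)) (s : TrtSeq p t) : TrtSeq p t := fun k => σ (s k)

/-- The design `σ d`, with weights `(σd)_s = p_{σ⁻¹ ∘ s}`. -/
def permDesign {p t : ℕ} (σ : Equiv.Perm (Fin t)) (w : TrtSeq p t → ℝ) : TrtSeq p t → ℝ :=
  fun s => w (permSeq σ⁻¹ s)

/-- A design is symmetric if its weights are invariant under treatment relabelling. -/
def IsSymmetricDesign {p t : ℕ} (w : TrtSeq p t → ℝ) : Prop :=
  ∀ (σ : Equiv.Perm (Fin t)) (s : TrtSeq p t), w (permSeq σ s) = w s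

/-- The symmetrized design `d*` with weights `p*_s = (1/t!) ∑_σ p_{σ⁻¹ ∘ s}`. -/
def symmetrize {p t : ℕ} (w : TrtSeq p t → ℝ) : TrtSeq p t → ℝ :=
  fun s => ((Nat.factorial t : ℝ))⁻¹ * ∑ σ : Equiv.Perm (Fin t), permDesign σ w s

/-- `q_s(x) = c_{s11} + 2 c_{s12} x + c_{s22} x²`. -/
def qSeq {p t : ℕ} (S : Matrix (Fin p) (Fin p) ℝ) (s : TrtSeq p t) (x : ℝ) : ℝ :=
  cseq S s 0 0 + 2 * cseq S s 0 1 * x + cseq S s 1 1 * x ^ 2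

/-- `q(x) = max_{s ∈ S} q_s(x)`. -/
def qMax (p t : ℕ) (S : Matrix (Fin p) (Fin p) ℝ) (x : ℝ) : ℝ :=
  sSup (Set.range fun s : TrtSeq p t => qSeq S s x)

/-- `y* = inf_x q(x)`. -/
def yStar (p t : ℕ) (S : Matrix (Fin p) (Fin p) ℝ) : ℝ := ⨅ x : ℝ, qMax p t S x

/-- `q_d(x) = ∑_s p_s q_s(x)`. -/
def qD {p t : ℕ} (S : Matrix (Fin p) (Fin p) ℝ) (w : TrtSeq p t → ℝ) (x : ℝ) : ℝ :=
  ∑ s : TrtSeq p t, w s * qSeq S s x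

/-- `x_d = -c_{d12}/c_{d22}`. -/
def xD {p t : ℕ} (n : ℕ) (S : Matrix (Fin p) (Fin p) ℝ) (w : TrtSeq p t → ℝ) : ℝ :=
  -(cD n S w 0 1) / cD n S w 1 1

/-- An exchangeable prior: a probability measure on `{τ : 1'τ = 0, τ ≠ 0}` that is
invariant under all coordinate permutations of `ℝ^t`. -/
def IsExchangeablePrior {t : ℕ} (g : Measure (Fin t → ℝ)) : Prop :=
  IsProbabilityMeasure g ∧
    g {τ : Fin t → ℝ | ¬((∑ i, τ i) = 0 ∧ τ ≠ 0)} = 0 ∧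
    ∀ σ : Equiv.Perm (Fin t), Measure.map (fun τ i => τ (σ i)) g = g

/-- `m_d(τ0) = min {ℓ' C_{d,τ0,λ0} ℓ : 1'ℓ = 0, ℓ'ℓ = 1}`. -/
def mD {p t : ℕ} (n : ℕ) (S : Matrix (Fin p) (Fin p) ℝ) (w : TrtSeq p t → ℝ) (l0 : ℝ)
    (τ0 : Fin t → ℝ) : ℝ :=
  sInf {v : ℝ | ∃ l : Fin t → ℝ, (∑ i, l i) = 0 ∧ l ⬝ᵥ l = 1 ∧
    v = l ⬝ᵥ (CInfo n S w τ0 l0 *ᵥ l)}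

/-- The E-criterion value `E_{g,λ0}(d) = ∫ m_d(τ0) g(dτ0)`. -/
def Ecrit {p t : ℕ} (n : ℕ) (S : Matrix (Fin p) (Fin p) ℝ) (g : Measure (Fin t → ℝ))
    (l0 : ℝ) (w : TrtSeq p t → ℝ) : ℝ :=
  ∫ τ0, mD n S w l0 τ0 ∂g

/-- Competing designs for E-optimality: designs with a.e. positive `τ0' C_{d22} τ0`
and `g`-integrable `m_d`. -/
def EAdmissible {p t : ℕ} (n : ℕ) (S : Matrix (Fin p) (Fin p) ℝ) (g : Measure (Fin t → ℝ))
    (l0 : ℝ) (w : TrtSeq p t → ℝ) : Prop :=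
  IsDesign w ∧ (∀ᵐ τ0 ∂g, 0 < τ0 ⬝ᵥ (CD n S w 1 1 *ᵥ τ0)) ∧
    Integrable (mD n S w l0) g

/-- `d` is `E_{g,λ0}`-optimal. -/
def EOptimal {p t : ℕ} (n : ℕ) (S : Matrix (Fin p) (Fin p) ℝ) (g : Measure (Fin t → ℝ))
    (l0 : ℝ) (w : TrtSeq p t → ℝ) : Prop :=
  ∀ w' : TrtSeq p t → ℝ, EAdmissible n S g l0 w' → Ecrit n S g l0 w' ≤ Ecrit n S g l0 w

/-- A pseudo symmetric design: treatments equireplicated in each period,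
and all `C_{dij}` completely symmetric. -/
def IsPseudoSymmetric {p t : ℕ} (n : ℕ) (S : Matrix (Fin p) (Fin p) ℝ)
    (w : TrtSeq p t → ℝ) : Prop :=
  (∀ (k : Fin p) (i : Fin t),
    (∑ s ∈ Finset.univ.filter fun s : TrtSeq p t => s k = i, w s) = 1 / (t : ℝ)) ∧
  ∀ i j : Fin 2, ∃ a b : ℝ, CD n S w i j = a • (1 : Matrix (Fin t) (Fin t) ℝ) + b • Jmat t

/-- Eigenvalues of a (Hermitian) matrix sorted increasingly with multiplicity. -/
def sortedEigs {t : ℕ} (C : Matrix (Fin t) (Fin t) ℝ) : Fin t → ℝ :=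
  if h : C.IsHermitian then (fun i => h.eigenvalues (Tuple.sort h.eigenvalues i))
  else fun _ => 0

/-- `Φ_D(C) = (∏_{i=1}^{t-1} a_i)^{1/(t-1)}` (eigenvalues sorted increasingly). -/
def PhiD {t : ℕ} (C : Matrix (Fin t) (Fin t) ℝ) : ℝ :=
  (∏ i ∈ Finset.univ.filter fun i : Fin t => (i : ℕ) ≠ 0, sortedEigs C i) ^ (((t : ℝ) - 1)⁻¹)

/-- `Φ_A(C) = (t-1)(∑_{i=1}^{t-1} a_i⁻¹)⁻¹` if `a_1 > 0`, else `0`. -/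
def PhiA {t : ℕ} (C : Matrix (Fin t) (Fin t) ℝ) : ℝ :=
  if ∀ i : Fin t, (i : ℕ) ≠ 0 → 0 < sortedEigs C i then
    ((t : ℝ) - 1) *
      (∑ i ∈ Finset.univ.filter fun i : Fin t => (i : ℕ) ≠ 0, (sortedEigs C i)⁻¹)⁻¹
  else 0

/-- `Φ_T(C) = tr(C)/(t-1)`. -/
def PhiT {t : ℕ} (C : Matrix (Fin t) (Fin t) ℝ) : ℝ := C.trace / ((t : ℝ) - 1)

/-- The criterion value `∫ Φ(C_{d,τ0,λ0}) g(dτ0)`. -/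
def PhiCrit {p t : ℕ} (n : ℕ) (S : Matrix (Fin p) (Fin p) ℝ)
    (Phi : Matrix (Fin t) (Fin t) ℝ → ℝ) (g : Measure (Fin t → ℝ)) (l0 : ℝ)
    (w : TrtSeq p t → ℝ) : ℝ :=
  ∫ τ0, Phi (CInfo n S w τ0 l0) ∂g

/-- Competing designs for a `Φ`-criterion. -/
def PhiAdmissible {p t : ℕ} (n : ℕ) (S : Matrix (Fin p) (Fin p) ℝ)
    (Phi : Matrix (Fin t) (Fin t) ℝ → ℝ) (g : Measure (Fin t → ℝ)) (l0 : ℝ)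
    (w : TrtSeq p t → ℝ) : Prop :=
  IsDesign w ∧ (∀ᵐ τ0 ∂g, 0 < τ0 ⬝ᵥ (CD n S w 1 1 *ᵥ τ0)) ∧
    Integrable (fun τ0 => Phi (CInfo n S w τ0 l0)) g

/-- `d` is `Φ_{g,λ0}`-optimal. -/
def PhiOptimal {p t : ℕ} (n : ℕ) (S : Matrix (Fin p) (Fin p) ℝ)
    (Phi : Matrix (Fin t) (Fin t) ℝ → ℝ) (g : Measure (Fin t → ℝ)) (l0 : ℝ)
    (w : TrtSeq p t → ℝ) : Prop :=
  ∀ w' : TrtSeq p t → ℝ, PhiAdmissible n S Phi g l0 w' →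
    PhiCrit n S Phi g l0 w' ≤ PhiCrit n S Phi g l0 w

/-- `H_1(s) = F_s`, `H_2(s) = T_s + λ0 F_s` (for estimating `λ`). -/
def Hmat {p t : ℕ} (l0 : ℝ) (i : Fin 2) (s : TrtSeq p t) : Matrix (Fin p) (Fin t) ℝ :=
  if i = 0 then Fmat s else Tmat s + l0 • Fmat s

/-- `Â_{sij} = B_t H_i(s)' B̃ H_j(s) B_t`. -/
def Ahat {p t : ℕ} (S : Matrix (Fin p) (Fin p) ℝ) (l0 : ℝ) (s : TrtSeq p t) (i j : Fin 2) :
    Matrix (Fin t) (Fin t) ℝ :=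
  Bmat t * (Hmat l0 i s)ᵀ * Btil S * Hmat l0 j s * Bmat t

/-- `h_{sij} = tr Â_{sij}`. -/
def hseq {p t : ℕ} (S : Matrix (Fin p) (Fin p) ℝ) (l0 : ℝ) (s : TrtSeq p t) (i j : Fin 2) : ℝ :=
  (Ahat S l0 s i j).trace

/-- `Â_{dij} = n ∑_s p_s Â_{sij}`. -/
def AhatD {p t : ℕ} (n : ℕ) (S : Matrix (Fin p) (Fin p) ℝ) (l0 : ℝ) (w : TrtSeq p t → ℝ)
    (i j : Fin 2) : Matrix (Fin t) (Fin t) ℝ :=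
  (n : ℝ) • ∑ s : TrtSeq p t, w s • Ahat S l0 s i j

/-- `A_{dij} = Â_{dij} - n (∑_s p_s H_i(s) B_t)' B̃ (∑_s p_s H_j(s) B_t)`. -/
def AD {p t : ℕ} (n : ℕ) (S : Matrix (Fin p) (Fin p) ℝ) (l0 : ℝ) (w : TrtSeq p t → ℝ)
    (i j : Fin 2) : Matrix (Fin t) (Fin t) ℝ :=
  AhatD n S l0 w i j -
    (n : ℝ) • ((∑ s : TrtSeq p t, w s • (Hmat l0 i s * Bmat t))ᵀ * Btil S *
      (∑ s : TrtSeq p t, w s • (Hmat l0 j s * Bmat t)))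

/-- `G` is a generalized inverse of `A`. -/
def IsGInv {t : ℕ} (A G : Matrix (Fin t) (Fin t) ℝ) : Prop := A * G * A = A

/-- `A_d(G) = A_{d11} - A_{d12} G A_{d21}` with `A_{d21} = A_{d12}'`. -/
def ADfun {p t : ℕ} (n : ℕ) (S : Matrix (Fin p) (Fin p) ℝ) (l0 : ℝ) (w : TrtSeq p t → ℝ)
    (G : Matrix (Fin t) (Fin t) ℝ) : Matrix (Fin t) (Fin t) ℝ :=
  AD n S l0 w 0 0 - AD n S l0 w 0 1 * G * (AD n S l0 w 0 1)ᵀ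

/-- `r_s(x) = h_{s11} + 2 h_{s12} x + h_{s22} x²`. -/
def rSeq {p t : ℕ} (S : Matrix (Fin p) (Fin p) ℝ) (l0 : ℝ) (s : TrtSeq p t) (x : ℝ) : ℝ :=
  hseq S l0 s 0 0 + 2 * hseq S l0 s 0 1 * x + hseq S l0 s 1 1 * x ^ 2

/-- `r(x) = max_s r_s(x)`. -/
def rMax (p t : ℕ) (S : Matrix (Fin p) (Fin p) ℝ) (l0 : ℝ) (x : ℝ) : ℝ :=
  sSup (Set.range fun s : TrtSeq p t => rSeq S l0 s x)

/-- `y_0 = inf_x r(x)`. -/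
def yZero (p t : ℕ) (S : Matrix (Fin p) (Fin p) ℝ) (l0 : ℝ) : ℝ := ⨅ x : ℝ, rMax p t S l0 x

/-!
Fix `x` and put `P(x) = A_{d11} + x (A_{d12} + A_{d12}') + x² A_{d22}`. Completing the square gives
`P(x) = A_d(G) + (A_{d12} G + x I) A_{d22} (A_{d12} G + x I)'`, so `tr A_d(G) ≤ tr P(x)`, while
`tr P(x)` is `n ∑ p_s r_s(x)` minus a nonnegative term coming from the mean of `H_1 + x H_2`. Hence
`tr A_d(G) ≤ n r(x)` for every design and every `x`. At `x = x₀` a symmetric design supported on the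
maximizers of `r_s(x₀)` loses nothing: its means vanish, and its `A_{d12} + x₀ A_{d22}` is
permutation invariant with zero row sums and, by the derivative condition, zero trace, so it is
zero and the square disappears. Finally, an exchangeable prior sees a matrix that kills the ones
vector only through its trace.
-/

section PermInvariant

variable {ι : Type*}

/-- Complete symmetry of a square matrix: simultaneous relabelling of rows and columns does not
change it. -/
def IsPermInvariant (M : Matrix ι ι ℝ) : Prop :=
  ∀ σ : Equiv.Perm ι, M.submatrix σ σ = M

namespace IsPermInvariant

variable {M N : Matrix ι ι ℝ} {i j k l : ι}

lemma transpose (hM : IsPermInvariant M) : IsPermInvariant Mᵀ := fun σ => by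
  rw [← transpose_submatrix, hM σ]

lemma add (hM : IsPermInvariant M) (hN : IsPermInvariant N) : IsPermInvariant (M + N) :=
  fun σ => by rw [submatrix_add, Pi.add_apply, Pi.add_apply, hM σ, hN σ]

lemma smul (hM : IsPermInvariant M) (c : ℝ) : IsPermInvariant (c • M) :=
  fun σ => by rw [submatrix_smul, Pi.smul_apply, Pi.smul_apply, hM σ]

lemma apply_perm (hM : IsPermInvariant M) (σ : Equiv.Perm ι) (i j : ι) :
    M (σ i) (σ j) = M i j :=
  congrFun₂ (hM σ) i j

lemma apply_self_eq (hM : IsPermInvariant M) (i k : ι) : M i i = M k k := by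
  classical simpa using hM.apply_perm (Equiv.swap k i) k k

lemma apply_eq_of_ne (hM : IsPermInvariant M) (hij : i ≠ j) (hkl : k ≠ l) : M i j = M k l := by
  obtain ⟨σ, rfl, rfl⟩ := MulAction.is_two_pretransitive_iff.1
    (Equiv.Perm.isMultiplyPretransitive ι 2) hkl hij
  exact hM.apply_perm σ k l

lemma eq_smul_one_add_smul_vecMulVec [DecidableEq ι] (hM : IsPermInvariant M) (hij : i ≠ j) :
    M = (M i i - M i j) • 1 + M i j • vecMulVec 1 1 := by
  ext k l
  rcases eq_or_ne k l with rfl | hkl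
  · simp [hM.apply_self_eq k i]
  · simp [hM.apply_eq_of_ne hkl hij, hkl]

lemma trace_mul_eq [Fintype ι] (hM : IsPermInvariant M) (hij : i ≠ j) {A : Matrix ι ι ℝ}
    (hA : A *ᵥ 1 = 0) : (A * M).trace = (M i i - M i j) * A.trace := by
  classical
  nth_rw 1 [hM.eq_smul_one_add_smul_vecMulVec hij]
  rw [Matrix.mul_add, Matrix.mul_smul, Matrix.mul_smul, mul_vecMulVec, hA, zero_vecMulVec,
    smul_zero, add_zero, Matrix.mul_one, trace_smul, smul_eq_mul]

end IsPermInvariant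

variable [Fintype ι]

lemma eq_zero_of_mulVec_one_of_subsingleton [Subsingleton ι] {A : Matrix ι ι ℝ}
    (hA : A *ᵥ 1 = 0) : A = 0 := by
  ext i j
  simpa [mulVec, dotProduct, Fintype.sum_subsingleton _ j] using congrFun hA i

lemma IsPermInvariant.eq_zero {Q : Matrix ι ι ℝ} (hQ : IsPermInvariant Q)
    (hone : Q *ᵥ 1 = 0) (htr : Q.trace = 0) : Q = 0 := by
  rcases subsingleton_or_nontrivial ι with _ | _
  · exact eq_zero_of_mulVec_one_of_subsingleton hone
  · obtain ⟨i, j, hij⟩ := exists_pair_ne ι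
    rw [← trace_mul_conjTranspose_self_eq_zero_iff, conjTranspose_eq_transpose_of_trivial,
      hQ.transpose.trace_mul_eq hij hone, htr, mul_zero]

lemma eq_zero_of_submatrix_perm {m : Type*} {M : Matrix m ι ℝ}
    (hM : ∀ σ : Equiv.Perm ι, M.submatrix id σ = M) (hone : M *ᵥ 1 = 0) : M = 0 := by
  classical
  ext k i
  have hconst (j : ι) : M k j = M k i := by
    simpa using congrFun₂ (hM (Equiv.swap i j)) k i
  have hcard : (Fintype.card ι : ℝ) ≠ 0 := Nat.cast_ne_zero.2 (Fintype.card_pos_iff.2 ⟨i⟩).ne'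
  simpa [mulVec, dotProduct, hconst, hcard] using congrFun hone k

end PermInvariant

section SecondMoment

variable {ι : Type*} {μ : Measure (ι → ℝ)}

/-- The matrix of (uncentred) second moments of the coordinates under `μ`. -/
def secondMomentMatrix (μ : Measure (ι → ℝ)) : Matrix ι ι ℝ :=
  Matrix.of fun i j => ∫ τ, τ i * τ j ∂μ

lemma isPermInvariant_secondMomentMatrix
    (hμ : ∀ σ : Equiv.Perm ι, μ.map (fun τ i => τ (σ i)) = μ) :
    IsPermInvariant (secondMomentMatrix μ) := by
  intro σ
  ext i j
  have hmeas : Measurable fun (τ : ι → ℝ) i => τ (σ i) := by fun_prop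
  have hprod : Measurable fun τ : ι → ℝ => τ i * τ j := by fun_prop
  calc ∫ τ, τ (σ i) * τ (σ j) ∂μ = ∫ τ, τ i * τ j ∂μ.map (fun τ i => τ (σ i)) :=
        (integral_map (f := fun τ => τ i * τ j) hmeas.aemeasurable hprod.aestronglyMeasurable).symm
    _ = ∫ τ, τ i * τ j ∂μ := by rw [hμ σ]

lemma secondMomentMatrix_apply_le (hμ : ∀ i, MemLp (fun τ : ι → ℝ => τ i) 2 μ) (i j : ι) :
    2 * secondMomentMatrix μ i j ≤ secondMomentMatrix μ i i + secondMomentMatrix μ j j := by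
  have hint (i j : ι) : Integrable (fun τ : ι → ℝ => τ i * τ j) μ := (hμ i).integrable_mul (hμ j)
  simp only [secondMomentMatrix, of_apply]
  rw [← integral_const_mul, ← integral_add (hint i i) (hint j j)]
  refine integral_mono ((hint i j).const_mul 2) ((hint i i).add (hint j j)) fun τ => ?_
  nlinarith [sq_nonneg (τ i - τ j)]

variable [Fintype ι]

lemma memLp_two_apply_of_integrable_dotProduct_self
    (hμ : Integrable (fun τ : ι → ℝ => τ ⬝ᵥ τ) μ) (i : ι) : MemLp (fun τ : ι → ℝ => τ i) 2 μ := by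
  have hmeas : Measurable fun τ : ι → ℝ => τ i := measurable_pi_apply i
  refine (memLp_two_iff_integrable_sq hmeas.aestronglyMeasurable).2
    (hμ.mono' (hmeas.pow_const 2).aestronglyMeasurable (.of_forall fun τ => ?_))
  rw [Real.norm_of_nonneg (sq_nonneg _), sq]
  exact Finset.single_le_sum (f := fun i => τ i * τ i) (fun _ _ => mul_self_nonneg _)
    (Finset.mem_univ i)

lemma integral_dotProduct_mulVec (hμ : ∀ i, MemLp (fun τ : ι → ℝ => τ i) 2 μ)
    (A : Matrix ι ι ℝ) :
    ∫ τ, τ ⬝ᵥ (A *ᵥ τ) ∂μ = (A * secondMomentMatrix μ).trace := by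
  have hint (i j : ι) : Integrable (fun τ : ι → ℝ => A i j * (τ j * τ i)) μ :=
    ((hμ j).integrable_mul (hμ i)).const_mul _
  calc ∫ τ, τ ⬝ᵥ (A *ᵥ τ) ∂μ = ∫ τ, ∑ i, ∑ j, A i j * (τ j * τ i) ∂μ := by
        simp only [dotProduct, mulVec, Finset.mul_sum, mul_left_comm, mul_comm]
    _ = ∑ i, ∑ j, A i j * ∫ τ, τ j * τ i ∂μ := by
        rw [integral_finsetSum _ fun i _ => integrable_finsetSum _ fun j _ => hint i j]
        simp only [integral_finsetSum _ fun j _ => hint _ j, integral_const_mul]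
    _ = (A * secondMomentMatrix μ).trace := rfl

lemma exists_integral_dotProduct_mulVec_eq_mul_trace
    (hperm : ∀ σ : Equiv.Perm ι, μ.map (fun τ i => τ (σ i)) = μ)
    (hmom : Integrable (fun τ : ι → ℝ => τ ⬝ᵥ τ) μ) :
    ∃ c : ℝ, 0 ≤ c ∧ ∀ A : Matrix ι ι ℝ, A *ᵥ 1 = 0 →
      ∫ τ, τ ⬝ᵥ (A *ᵥ τ) ∂μ = c * A.trace := by
  have hL2 := memLp_two_apply_of_integrable_dotProduct_self hmom
  have hM := isPermInvariant_secondMomentMatrix hperm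
  rcases subsingleton_or_nontrivial ι with _ | _
  · refine ⟨0, le_rfl, fun A hA => ?_⟩
    simp [eq_zero_of_mulVec_one_of_subsingleton hA]
  · obtain ⟨i, j, hij⟩ := exists_pair_ne ι
    refine ⟨_, ?_, fun A hA => (integral_dotProduct_mulVec hL2 A).trans (hM.trace_mul_eq hij hA)⟩
    linarith [secondMomentMatrix_apply_le hL2 i j, hM.apply_self_eq i j]

end SecondMoment

section CrossGram

variable {ι m k l : Type*} [Fintype ι]

/-- The weighted mean of a family of matrices. -/
def weightedMean (w : ι → ℝ) (X : ι → Matrix m k ℝ) : Matrix m k ℝ := ∑ s, w s • X s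

lemma weightedMean_const {w : ι → ℝ} (hw : ∑ s, w s = 1) (M : Matrix m k ℝ) :
    weightedMean w (fun _ => M) = M := by
  rw [weightedMean, ← Finset.sum_smul, hw, one_smul]

variable [Fintype m]

/-- The weighted cross-Gram matrix of two families of matrices for the bilinear form `B`; for
centred families and weights summing to one it is their cross-covariance. -/
def crossGram (B : Matrix m m ℝ) (w : ι → ℝ) (X : ι → Matrix m k ℝ) (Y : ι → Matrix m l ℝ) :
    Matrix k l ℝ :=
  ∑ s, w s • ((X s)ᵀ * B * Y s)

variable {B : Matrix m m ℝ} {w : ι → ℝ} {X : ι → Matrix m k ℝ} {Y : ι → Matrix m l ℝ}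

lemma transpose_crossGram (hB : Bᵀ = B) : (crossGram B w X Y)ᵀ = crossGram B w Y X := by
  simp only [crossGram, transpose_sum, transpose_smul, transpose_mul, transpose_transpose, hB,
    Matrix.mul_assoc]

lemma crossGram_sub_left (X' : ι → Matrix m k ℝ) :
    crossGram B w (fun s => X s - X' s) Y = crossGram B w X Y - crossGram B w X' Y := by
  simp only [crossGram, transpose_sub, Matrix.sub_mul, smul_sub, Finset.sum_sub_distrib]

lemma crossGram_sub_right (Y' : ι → Matrix m l ℝ) :
    crossGram B w X (fun s => Y s - Y' s) = crossGram B w X Y - crossGram B w X Y' := by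
  simp only [crossGram, Matrix.mul_sub, smul_sub, Finset.sum_sub_distrib]

lemma crossGram_const_left (M : Matrix m k ℝ) :
    crossGram B w (fun _ => M) Y = Mᵀ * B * weightedMean w Y := by
  simp only [crossGram, weightedMean, Matrix.mul_sum, Matrix.mul_smul]

lemma crossGram_const_right (M : Matrix m l ℝ) :
    crossGram B w X (fun _ => M) = (weightedMean w X)ᵀ * B * M := by
  simp only [crossGram, weightedMean, transpose_sum, transpose_smul, Matrix.sum_mul,
    Matrix.smul_mul]

lemma crossGram_centered (hw : ∑ s, w s = 1) :
    crossGram B w (fun s => X s - weightedMean w X) (fun s => Y s - weightedMean w Y) =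
      crossGram B w X Y - (weightedMean w X)ᵀ * B * weightedMean w Y := by
  rw [crossGram_sub_left, crossGram_sub_right, crossGram_sub_right, crossGram_const_right,
    crossGram_const_left, crossGram_const_left, weightedMean_const hw, sub_self, sub_zero]

lemma smul_crossGram (c : ℝ) : c • crossGram B w X Y = crossGram B (c • w) X Y := by
  simp only [crossGram, Finset.smul_sum, smul_smul, Pi.smul_apply, smul_eq_mul]

lemma posSemidef_crossGram_self [Finite l] (hB : B.PosSemidef) (hw : ∀ s, 0 ≤ w s) :
    (crossGram B w Y Y).PosSemidef :=
  posSemidef_sum _ fun s _ => (hB.conjTranspose_mul_mul_same (Y s)).smul (hw s)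

variable [Fintype l]

lemma crossGram_mulVec (u : l → ℝ) :
    crossGram B w X Y *ᵥ u = ∑ s, w s • ((X s)ᵀ *ᵥ (B *ᵥ (Y s *ᵥ u))) := by
  simp only [crossGram, sum_mulVec, smul_mulVec, mulVec_mulVec, Matrix.mul_assoc]

lemma dotProduct_crossGram_self_mulVec (u : l → ℝ) :
    u ⬝ᵥ (crossGram B w Y Y *ᵥ u) = ∑ s, w s * ((Y s *ᵥ u) ⬝ᵥ (B *ᵥ (Y s *ᵥ u))) := by
  simp only [crossGram_mulVec, dotProduct_sum, dotProduct_smul, smul_eq_mul, dotProduct_mulVec u,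
    vecMul_transpose]

lemma crossGram_mulVec_eq_zero (hB : B.PosSemidef) (hw : ∀ s, 0 ≤ w s) {u : l → ℝ}
    (hu : crossGram B w Y Y *ᵥ u = 0) : crossGram B w X Y *ᵥ u = 0 := by
  have hnonneg (s : ι) : 0 ≤ w s * ((Y s *ᵥ u) ⬝ᵥ (B *ᵥ (Y s *ᵥ u))) :=
    mul_nonneg (hw s) (hB.dotProduct_mulVec_nonneg _)
  have hsum : ∑ s, w s * ((Y s *ᵥ u) ⬝ᵥ (B *ᵥ (Y s *ᵥ u))) = 0 := by
    rw [← dotProduct_crossGram_self_mulVec, hu, dotProduct_zero]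
  rw [crossGram_mulVec]
  refine Finset.sum_eq_zero fun s hs => ?_
  rcases mul_eq_zero.1 ((Finset.sum_eq_zero_iff_of_nonneg fun s _ => hnonneg s).1 hsum s hs)
    with hws | hquad
  · rw [hws, zero_smul]
  · rw [(hB.dotProduct_mulVec_zero_iff (Y s *ᵥ u)).1 hquad, mulVec_zero, smul_zero]

lemma crossGram_mul_mul_crossGram_self (hB : B.PosSemidef) (hw : ∀ s, 0 ≤ w s)
    {G : Matrix l l ℝ} (hG : crossGram B w Y Y * G * crossGram B w Y Y = crossGram B w Y Y) :
    crossGram B w X Y * G * crossGram B w Y Y = crossGram B w X Y := by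
  classical
  refine ext_of_mulVec_single fun i => sub_eq_zero.1 ?_
  rw [Matrix.mul_assoc, ← mulVec_mulVec, ← mulVec_sub]
  apply crossGram_mulVec_eq_zero hB hw
  rw [mulVec_sub, mulVec_mulVec, ← Matrix.mul_assoc, hG, sub_self]

end CrossGram

lemma sub_mul_mul_transpose_add_sq {k R : Type*} [Fintype k] [DecidableEq k] [CommRing R]
    (D : Matrix k k R) {A N G : Matrix k k R} (hA : Aᵀ = A) (hN : N * G * A = N) (x : R) :
    D - N * G * Nᵀ + (N * G + x • 1) * A * (N * G + x • 1)ᵀ =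
      D + x • (N + Nᵀ) + x ^ 2 • A := by
  have hNT : A * (N * G)ᵀ = Nᵀ := by rw [← hA, ← transpose_mul, hN]
  have hNGN : N * (N * G)ᵀ = N * G * Nᵀ := by
    rw [← hNT, ← Matrix.mul_assoc, hN]
  simp only [transpose_add, transpose_smul, transpose_one, Matrix.add_mul, Matrix.mul_add,
    Matrix.smul_mul, Matrix.mul_smul, Matrix.one_mul, Matrix.mul_one, hNGN, hNT, hN, smul_add,
    smul_smul, pow_two]
  abel

lemma posSemidef_sub_inv_smul_vecMulVec {k : Type*} [Fintype k] {P : Matrix k k ℝ}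
    (hP : P.PosSemidef) (v : k → ℝ) :
    (P - (v ⬝ᵥ (P *ᵥ v))⁻¹ • vecMulVec (P *ᵥ v) (P *ᵥ v)).PosSemidef := by
  classical
  set u := P *ᵥ v with hu
  rcases eq_or_ne (v ⬝ᵥ u) 0 with hvu | hvu
  · simpa [hvu] using hP
  set c := (v ⬝ᵥ u)⁻¹ with hc
  have hvP : v ᵥ* P = u := by
    rw [← mulVec_transpose, show Pᵀ = P from hP.isHermitian.eq]
  have hleft : (1 - c • vecMulVec v u)ᴴ * P = P - c • vecMulVec u u := by
    rw [conjTranspose_eq_transpose_of_trivial, transpose_sub, transpose_one, transpose_smul,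
      transpose_vecMulVec, Matrix.sub_mul, Matrix.one_mul, Matrix.smul_mul, vecMulVec_mul, hvP]
  have hker : (P - c • vecMulVec u u) *ᵥ v = 0 := by
    simp [sub_mulVec, smul_mulVec, vecMulVec_mulVec, ← hu, dotProduct_comm u v, hc, smul_smul, hvu]
  have hcongr : (1 - c • vecMulVec v u)ᴴ * P * (1 - c • vecMulVec v u) =
      P - c • vecMulVec u u := by
    rw [hleft, Matrix.mul_sub, Matrix.mul_one, Matrix.mul_smul, mul_vecMulVec, hker,
      zero_vecMulVec, smul_zero, sub_zero]
  rw [← hcongr]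
  exact hP.conjTranspose_mul_mul_same _

lemma posSemidef_Btil {p : ℕ} {S : Matrix (Fin p) (Fin p) ℝ} (hS : S.PosDef) :
    (Btil S).PosSemidef := by
  have hone : (1 : Fin p → ℝ) ᵥ* S⁻¹ = S⁻¹ *ᵥ 1 := by
    rw [← mulVec_transpose, show S⁻¹ᵀ = S⁻¹ from hS.inv.isHermitian.eq]
  have hJ : S⁻¹ * Jmat p * S⁻¹ = vecMulVec (S⁻¹ *ᵥ 1) (S⁻¹ *ᵥ 1) := by
    rw [show Jmat p = vecMulVec 1 1 by ext; simp [Jmat], mul_vecMulVec, vecMulVec_mul, hone]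
  rw [Btil, hJ]
  exact posSemidef_sub_inv_smul_vecMulVec hS.inv.posSemidef 1

section Design

variable {p t : ℕ} {S : Matrix (Fin p) (Fin p) ℝ} {l0 : ℝ} {w : TrtSeq p t → ℝ}

lemma Bmat_mulVec_one : Bmat t *ᵥ 1 = 0 := by
  ext i
  have ht : (t : ℝ) ≠ 0 := Nat.cast_ne_zero.2 i.pos.ne'
  have hJ : Jmat t *ᵥ 1 = (t : ℝ) • 1 := by ext; simp [Jmat, mulVec, dotProduct]
  rw [Bmat, sub_mulVec, one_mulVec, smul_mulVec, hJ, inv_smul_smul₀ ht, sub_self]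

lemma isPermInvariant_Bmat : IsPermInvariant (Bmat t) := by
  intro σ
  ext i j
  simp [Bmat, Jmat, Matrix.one_apply]

lemma transpose_Bmat : (Bmat t)ᵀ = Bmat t := by
  ext i j
  simp [Bmat, Jmat, Matrix.one_apply, eq_comm]

/-- The incidence matrix `H_i(s)` restricted to contrasts, `H_i(s) B_t`. -/
def contrastMat (l0 : ℝ) (i : Fin 2) (s : TrtSeq p t) : Matrix (Fin p) (Fin t) ℝ :=
  Hmat l0 i s * Bmat t

lemma contrastMat_mulVec_one (i : Fin 2) (s : TrtSeq p t) : contrastMat l0 i s *ᵥ 1 = 0 := by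
  rw [contrastMat, ← mulVec_mulVec, Bmat_mulVec_one, mulVec_zero]

lemma weightedMean_contrastMat_mulVec_one (i : Fin 2) :
    weightedMean w (contrastMat l0 i) *ᵥ 1 = 0 := by
  simp only [weightedMean, sum_mulVec, smul_mulVec, contrastMat_mulVec_one, smul_zero,
    Finset.sum_const_zero]

lemma Ahat_eq (s : TrtSeq p t) (i j : Fin 2) :
    Ahat S l0 s i j = (contrastMat l0 i s)ᵀ * Btil S * contrastMat l0 j s := by
  simp only [Ahat, contrastMat, transpose_mul, transpose_Bmat, Matrix.mul_assoc]

lemma AD_eq (n : ℕ) (i j : Fin 2) :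
    AD n S l0 w i j = (n : ℝ) • (crossGram (Btil S) w (contrastMat l0 i) (contrastMat l0 j) -
      (weightedMean w (contrastMat l0 i))ᵀ * Btil S * weightedMean w (contrastMat l0 j)) := by
  simp only [AD, AhatD, Ahat_eq, smul_sub]
  rfl

section IsDesign

variable {n : ℕ}

lemma AD_eq_crossGram (hw : IsDesign w) (i j : Fin 2) :
    AD n S l0 w i j = crossGram (Btil S) ((n : ℝ) • w)
      (fun s => contrastMat l0 i s - weightedMean w (contrastMat l0 i))
      (fun s => contrastMat l0 j s - weightedMean w (contrastMat l0 j)) := by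
  rw [AD_eq, ← crossGram_centered hw.2, smul_crossGram]

lemma IsDesign.smul_apply_nonneg (hw : IsDesign w) (s : TrtSeq p t) : 0 ≤ ((n : ℝ) • w) s :=
  mul_nonneg n.cast_nonneg (hw.1 s)

lemma AD_mulVec_one (hw : IsDesign w) (i j : Fin 2) : AD n S l0 w i j *ᵥ 1 = 0 := by
  rw [AD_eq_crossGram hw, crossGram_mulVec]
  simp only [sub_mulVec, contrastMat_mulVec_one, weightedMean_contrastMat_mulVec_one, sub_zero,
    mulVec_zero, smul_zero, Finset.sum_const_zero]

lemma transpose_AD (hS : S.PosDef) (hw : IsDesign w) (i j : Fin 2) :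
    (AD n S l0 w i j)ᵀ = AD n S l0 w j i := by
  rw [AD_eq_crossGram hw, AD_eq_crossGram hw, transpose_crossGram]
  exact (posSemidef_Btil hS).isHermitian.eq

lemma posSemidef_AD (hS : S.PosDef) (hw : IsDesign w) (i : Fin 2) :
    (AD n S l0 w i i).PosSemidef := by
  rw [AD_eq_crossGram hw]
  exact posSemidef_crossGram_self (posSemidef_Btil hS) hw.smul_apply_nonneg

lemma AD_mul_mul_AD (hS : S.PosDef) (hw : IsDesign w) {G : Matrix (Fin t) (Fin t) ℝ}
    (i : Fin 2) {j : Fin 2} (hG : IsGInv (AD n S l0 w j j) G) :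
    AD n S l0 w i j * G * AD n S l0 w j j = AD n S l0 w i j := by
  rw [IsGInv, AD_eq_crossGram hw] at hG
  rw [AD_eq_crossGram hw, AD_eq_crossGram hw]
  exact crossGram_mul_mul_crossGram_self (posSemidef_Btil hS) hw.smul_apply_nonneg hG

lemma ADfun_mulVec_one (hS : S.PosDef) (hw : IsDesign w) (G : Matrix (Fin t) (Fin t) ℝ) :
    ADfun n S l0 w G *ᵥ 1 = 0 := by
  rw [ADfun, transpose_AD hS hw, sub_mulVec, ← mulVec_mulVec, AD_mulVec_one hw,
    AD_mulVec_one hw, mulVec_zero, sub_zero]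

end IsDesign

/-- The quadratic matrix pencil `A_{d11} + x (A_{d12} + A_{d21}) + x² A_{d22}`, which dominates
`A_d(G)` for every `x`. -/
def infoPencil (n : ℕ) (S : Matrix (Fin p) (Fin p) ℝ) (l0 : ℝ) (w : TrtSeq p t → ℝ) (x : ℝ) :
    Matrix (Fin t) (Fin t) ℝ :=
  AD n S l0 w 0 0 + x • (AD n S l0 w 0 1 + (AD n S l0 w 0 1)ᵀ) + x ^ 2 • AD n S l0 w 1 1

section InfoPencil

variable {n : ℕ} {G : Matrix (Fin t) (Fin t) ℝ}

lemma ADfun_add_sq_eq_infoPencil (hS : S.PosDef) (hw : IsDesign w)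
    (hG : IsGInv (AD n S l0 w 1 1) G) (x : ℝ) :
    ADfun n S l0 w G +
        (AD n S l0 w 0 1 * G + x • 1) * AD n S l0 w 1 1 * (AD n S l0 w 0 1 * G + x • 1)ᵀ =
      infoPencil n S l0 w x :=
  sub_mul_mul_transpose_add_sq _ (transpose_AD hS hw 1 1) (AD_mul_mul_AD hS hw 0 hG) x

lemma trace_ADfun_le_trace_infoPencil (hS : S.PosDef) (hw : IsDesign w)
    (hG : IsGInv (AD n S l0 w 1 1) G) (x : ℝ) :
    (ADfun n S l0 w G).trace ≤ (infoPencil n S l0 w x).trace := by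
  rw [← ADfun_add_sq_eq_infoPencil hS hw hG, trace_add]
  exact le_add_of_nonneg_right
    ((posSemidef_AD hS hw 1).mul_mul_conjTranspose_same _).trace_nonneg

lemma ADfun_eq_infoPencil (hS : S.PosDef) (hw : IsDesign w) (hG : IsGInv (AD n S l0 w 1 1) G)
    {x : ℝ} (hx : AD n S l0 w 0 1 + x • AD n S l0 w 1 1 = 0) :
    ADfun n S l0 w G = infoPencil n S l0 w x := by
  rw [← ADfun_add_sq_eq_infoPencil hS hw hG, Matrix.add_mul, AD_mul_mul_AD hS hw 0 hG,
    Matrix.smul_mul, Matrix.one_mul, hx, Matrix.zero_mul, add_zero]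

end InfoPencil

lemma trace_AD (n : ℕ) (i j : Fin 2) :
    (AD n S l0 w i j).trace = n * (∑ s, w s * hseq S l0 s i j -
      ((weightedMean w (contrastMat l0 i))ᵀ * Btil S *
        weightedMean w (contrastMat l0 j)).trace) := by
  simp only [AD_eq, crossGram, trace_smul, trace_sub, trace_sum, ← Ahat_eq, hseq, smul_eq_mul]

lemma sum_mul_rSeq (x : ℝ) :
    ∑ s, w s * rSeq S l0 s x = ∑ s, w s * hseq S l0 s 0 0 + 2 * x * ∑ s, w s * hseq S l0 s 0 1 +
      x ^ 2 * ∑ s, w s * hseq S l0 s 1 1 := by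
  simp only [Finset.mul_sum, ← Finset.sum_add_distrib]
  exact Finset.sum_congr rfl fun s _ => by rw [rSeq]; ring

lemma trace_infoPencil (hS : S.PosDef) (n : ℕ) (x : ℝ) :
    (infoPencil n S l0 w x).trace = n * (∑ s, w s * rSeq S l0 s x -
      ((weightedMean w (contrastMat l0 0) + x • weightedMean w (contrastMat l0 1))ᵀ * Btil S *
        (weightedMean w (contrastMat l0 0) + x • weightedMean w (contrastMat l0 1))).trace) := by
  set m₀ := weightedMean w (contrastMat l0 0)
  set m₁ := weightedMean w (contrastMat l0 1)
  have hcross : (m₁ᵀ * Btil S * m₀).trace = (m₀ᵀ * Btil S * m₁).trace := by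
    rw [← trace_transpose, transpose_mul, transpose_mul, transpose_transpose,
      show (Btil S)ᵀ = Btil S from (posSemidef_Btil hS).isHermitian.eq, Matrix.mul_assoc]
  simp only [infoPencil, trace_add, trace_smul, trace_transpose, trace_AD, sum_mul_rSeq,
    transpose_add, transpose_smul, Matrix.add_mul, Matrix.mul_add, Matrix.smul_mul,
    Matrix.mul_smul, hcross, smul_eq_mul]
  ring

lemma rSeq_le_rMax (s : TrtSeq p t) (x : ℝ) : rSeq S l0 s x ≤ rMax p t S l0 x :=
  le_csSup (Set.finite_range _).bddAbove (Set.mem_range_self s)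

lemma IsDesign.sum_mul_rSeq_le_rMax (hw : IsDesign w) (x : ℝ) :
    ∑ s, w s * rSeq S l0 s x ≤ rMax p t S l0 x :=
  calc ∑ s, w s * rSeq S l0 s x ≤ ∑ s, w s * rMax p t S l0 x :=
        Finset.sum_le_sum fun s _ => mul_le_mul_of_nonneg_left (rSeq_le_rMax s x) (hw.1 s)
    _ = rMax p t S l0 x := by rw [← Finset.sum_mul, hw.2, one_mul]

lemma IsDesign.sum_mul_rSeq_eq_rMax (hw : IsDesign w) {x : ℝ}
    (hsupp : ∀ s, rSeq S l0 s x ≠ rMax p t S l0 x → w s = 0) :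
    ∑ s, w s * rSeq S l0 s x = rMax p t S l0 x :=
  calc ∑ s, w s * rSeq S l0 s x = ∑ s, w s * rMax p t S l0 x :=
        Finset.sum_congr rfl fun s _ => by
          by_cases hs : rSeq S l0 s x = rMax p t S l0 x
          · rw [hs]
          · rw [hsupp s hs, zero_mul, zero_mul]
    _ = rMax p t S l0 x := by rw [← Finset.sum_mul, hw.2, one_mul]

theorem trace_ADfun_le_mul_rMax (hS : S.PosDef) (hw : IsDesign w) {n : ℕ}
    {G : Matrix (Fin t) (Fin t) ℝ} (hG : IsGInv (AD n S l0 w 1 1) G) (x : ℝ) :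
    (ADfun n S l0 w G).trace ≤ n * rMax p t S l0 x := by
  refine (trace_ADfun_le_trace_infoPencil hS hw hG x).trans ?_
  rw [trace_infoPencil hS]
  refine mul_le_mul_of_nonneg_left ?_ n.cast_nonneg
  exact (sub_le_self _ ((posSemidef_Btil hS).conjTranspose_mul_mul_same _).trace_nonneg).trans
    (hw.sum_mul_rSeq_le_rMax x)

section Symmetric

lemma Hmat_permSeq_submatrix (i : Fin 2) (σ : Equiv.Perm (Fin t)) (s : TrtSeq p t) :
    (Hmat l0 i (permSeq σ s)).submatrix id σ = Hmat l0 i s := by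
  ext k a
  fin_cases i <;> simp [Hmat, Tmat, Fmat, permSeq]

lemma contrastMat_permSeq_submatrix (i : Fin 2) (σ : Equiv.Perm (Fin t)) (s : TrtSeq p t) :
    (contrastMat l0 i (permSeq σ s)).submatrix id σ = contrastMat l0 i s := by
  rw [contrastMat, ← submatrix_mul_equiv _ _ id σ σ, Hmat_permSeq_submatrix,
    isPermInvariant_Bmat σ, contrastMat]

namespace IsSymmetricDesign

lemma sum_smul_permSeq {E : Type*} [AddCommMonoid E] [Module ℝ E] (hw : IsSymmetricDesign w)
    (σ : Equiv.Perm (Fin t)) (f : TrtSeq p t → E) :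
    ∑ s, w s • f (permSeq σ s) = ∑ s, w s • f s := by
  rw [← Equiv.sum_comp (Equiv.piCongrRight fun _ : Fin p => σ) fun s => w s • f s]
  exact Finset.sum_congr rfl fun s _ => congrArg (· • f (permSeq σ s)) (hw σ s).symm

lemma weightedMean_contrastMat (hw : IsSymmetricDesign w) (i : Fin 2) :
    weightedMean w (contrastMat l0 i) = 0 := by
  refine eq_zero_of_submatrix_perm (fun σ => ?_) (weightedMean_contrastMat_mulVec_one i)
  calc (weightedMean w (contrastMat l0 i)).submatrix id σ
      = (∑ s, w s • contrastMat l0 i (permSeq σ s)).submatrix id σ := by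
        rw [hw.sum_smul_permSeq, weightedMean]
    _ = ∑ s, w s • (contrastMat l0 i (permSeq σ s)).submatrix id σ := by
        ext; simp [Matrix.sum_apply]
    _ = weightedMean w (contrastMat l0 i) := by
        simp only [contrastMat_permSeq_submatrix, weightedMean]

lemma isPermInvariant_AD (hw : IsSymmetricDesign w) (n : ℕ) (i j : Fin 2) :
    IsPermInvariant (AD n S l0 w i j) := by
  have hAD : AD n S l0 w i j = (n : ℝ) • ∑ s, w s • Ahat S l0 s i j := by
    simp only [AD_eq, crossGram, ← Ahat_eq, hw.weightedMean_contrastMat, Matrix.mul_zero, sub_zero]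
  have hAhat (σ : Equiv.Perm (Fin t)) (s : TrtSeq p t) :
      (Ahat S l0 (permSeq σ s) i j).submatrix σ σ = Ahat S l0 s i j := by
    rw [Ahat_eq, Ahat_eq, ← contrastMat_permSeq_submatrix i σ s,
      ← contrastMat_permSeq_submatrix j σ s]
    rfl
  intro σ
  calc (AD n S l0 w i j).submatrix σ σ
      = ((n : ℝ) • ∑ s, w s • Ahat S l0 (permSeq σ s) i j).submatrix σ σ := by
        rw [hw.sum_smul_permSeq σ fun s => Ahat S l0 s i j, hAD]
    _ = (n : ℝ) • ∑ s, w s • (Ahat S l0 (permSeq σ s) i j).submatrix σ σ := by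
        ext; simp [Matrix.sum_apply]
    _ = AD n S l0 w i j := by simp only [hAhat, hAD]

lemma trace_AD (hw : IsSymmetricDesign w) (n : ℕ) (i j : Fin 2) :
    (AD n S l0 w i j).trace = n * ∑ s, w s * hseq S l0 s i j := by
  rw [_root_.trace_AD, hw.weightedMean_contrastMat, hw.weightedMean_contrastMat, Matrix.mul_zero,
    trace_zero, sub_zero]

lemma trace_infoPencil (hw : IsSymmetricDesign w) (hS : S.PosDef) (n : ℕ) (x : ℝ) :
    (infoPencil n S l0 w x).trace = n * ∑ s, w s * rSeq S l0 s x := by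
  rw [_root_.trace_infoPencil hS, hw.weightedMean_contrastMat, hw.weightedMean_contrastMat,
    smul_zero, add_zero, Matrix.mul_zero, trace_zero, sub_zero]

end IsSymmetricDesign

lemma deriv_rSeq (s : TrtSeq p t) (x : ℝ) :
    deriv (rSeq S l0 s) x = 2 * (hseq S l0 s 0 1 + x * hseq S l0 s 1 1) := by
  have hderiv : HasDerivAt (rSeq S l0 s)
      (2 * hseq S l0 s 0 1 * 1 + hseq S l0 s 1 1 * (2 * x ^ 1)) x :=
    (((hasDerivAt_id x).const_mul _).const_add _).add ((hasDerivAt_pow 2 x).const_mul _)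
  rw [hderiv.deriv]
  ring

lemma IsSymmetricDesign.AD_add_smul_AD_eq_zero (hsym : IsSymmetricDesign w) (hw : IsDesign w)
    {x : ℝ} (hx : ∑ s, w s * deriv (rSeq S l0 s) x = 0) (n : ℕ) :
    AD n S l0 w 0 1 + x • AD n S l0 w 1 1 = 0 := by
  refine ((hsym.isPermInvariant_AD n 0 1).add
    ((hsym.isPermInvariant_AD n 1 1).smul x)).eq_zero ?_ ?_
  · rw [add_mulVec, smul_mulVec, AD_mulVec_one hw, AD_mulVec_one hw, smul_zero, add_zero]
  · have hsum : ∑ s, w s * deriv (rSeq S l0 s) x =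
        2 * (∑ s, w s * hseq S l0 s 0 1 + x * ∑ s, w s * hseq S l0 s 1 1) := by
      simp only [deriv_rSeq, Finset.mul_sum, ← Finset.sum_add_distrib]
      exact Finset.sum_congr rfl fun s _ => by ring
    rw [trace_add, trace_smul, hsym.trace_AD, hsym.trace_AD, smul_eq_mul]
    linear_combination (n / 2 : ℝ) * (hx - hsum)

theorem IsSymmetricDesign.trace_ADfun_eq_mul_rMax (hsym : IsSymmetricDesign w)
    (hw : IsDesign w) (hS : S.PosDef) {x : ℝ}
    (hx : ∑ s, w s * deriv (rSeq S l0 s) x = 0)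
    (hsupp : ∀ s, rSeq S l0 s x ≠ rMax p t S l0 x → w s = 0) {n : ℕ}
    {G : Matrix (Fin t) (Fin t) ℝ} (hG : IsGInv (AD n S l0 w 1 1) G) :
    (ADfun n S l0 w G).trace = n * rMax p t S l0 x := by
  rw [ADfun_eq_infoPencil hS hw hG (hsym.AD_add_smul_AD_eq_zero hw hx n),
    hsym.trace_infoPencil hS, hw.sum_mul_rSeq_eq_rMax hsupp]

end Symmetric

end Design

theorem stmt17_general {p t : ℕ} (n : ℕ) {S : Matrix (Fin p) (Fin p) ℝ} (hS : S.PosDef) (l0 : ℝ)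
    {g : Measure (Fin t → ℝ)}
    (hg : ∀ σ : Equiv.Perm (Fin t), g.map (fun τ i => τ (σ i)) = g)
    (hmom : Integrable (fun τ : Fin t → ℝ => τ ⬝ᵥ τ) g) {x : ℝ}
    {w : TrtSeq p t → ℝ} (hw : IsDesign w) (hsym : IsSymmetricDesign w)
    (hx : ∑ s, w s * deriv (rSeq S l0 s) x = 0)
    (hsupp : ∀ s, rSeq S l0 s x ≠ rMax p t S l0 x → w s = 0)
    {w' : TrtSeq p t → ℝ} (hw' : IsDesign w')
    {G' : Matrix (Fin t) (Fin t) ℝ} (hG' : IsGInv (AD n S l0 w' 1 1) G')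
    {G : Matrix (Fin t) (Fin t) ℝ} (hG : IsGInv (AD n S l0 w 1 1) G) :
    ∫ τ, τ ⬝ᵥ (ADfun n S l0 w' G' *ᵥ τ) ∂g ≤ ∫ τ, τ ⬝ᵥ (ADfun n S l0 w G *ᵥ τ) ∂g := by
  obtain ⟨c, hc, hint⟩ := exists_integral_dotProduct_mulVec_eq_mul_trace hg hmom
  rw [hint _ (ADfun_mulVec_one hS hw' G'), hint _ (ADfun_mulVec_one hS hw G),
    hsym.trace_ADfun_eq_mul_rMax hw hS hx hsupp hG]
  exact mul_le_mul_of_nonneg_left (trace_ADfun_le_mul_rMax hS hw' hG' x) hc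

/-- a symmetric design satisfying the scalar conditions maximizes the
Bayes Fisher information for `λ` under any exchangeable prior with finite second moment. -/
theorem stmt17 (p t n : ℕ) (hp : 2 ≤ p) (ht : 3 ≤ t) (hn : 1 ≤ n)
    (S : Matrix (Fin p) (Fin p) ℝ) (hS : S.PosDef) (l0 : ℝ)
    (g : Measure (Fin t → ℝ)) (hg : IsExchangeablePrior g)
    (hmom : Integrable (fun τ : Fin t → ℝ => τ ⬝ᵥ τ) g)
    (x0 : ℝ) (hx0 : rMax p t S l0 x0 = yZero p t S l0)
    (hx0u : ∀ x : ℝ, rMax p t S l0 x = yZero p t S l0 → x = x0)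
    (w : TrtSeq p t → ℝ) (hw : IsDesign w) (hsym : IsSymmetricDesign w)
    (h1 : ∑ s ∈ Finset.univ.filter (fun s : TrtSeq p t => rSeq S l0 s x0 = yZero p t S l0),
        w s * deriv (rSeq S l0 s) x0 = 0)
    (h2 : ∀ s : TrtSeq p t, rSeq S l0 s x0 ≠ yZero p t S l0 → w s = 0) :
    ∀ w' : TrtSeq p t → ℝ, IsDesign w' →
      ∀ G' : Matrix (Fin t) (Fin t) ℝ, IsGInv (AD n S l0 w' 1 1) G' →
      ∀ G : Matrix (Fin t) (Fin t) ℝ, IsGInv (AD n S l0 w 1 1) G →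
      ∫ τ, τ ⬝ᵥ (ADfun n S l0 w' G' *ᵥ τ) ∂g ≤
        ∫ τ, τ ⬝ᵥ (ADfun n S l0 w G *ᵥ τ) ∂g := by
  rw [← hx0] at h1 h2
  rw [Finset.sum_filter_of_ne fun s _ hs => not_imp_comm.1 (h2 s) (left_ne_zero_of_mul hs)] at h1
  exact fun _ hw' _ hG' _ hG => stmt17_general n hS l0 hg.2.2 hmom hw hsym h1 h2 hw' hG' hG
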